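/- Let T be a randomized decision tree on inputs from {0,1}^k that computes a function f : {0,1}^k → {0,1} with error at most δ, i.e., for every input x, Pr[ T(x) ≠ f(x) ] ≤ δ over the internal randomness of T. Then there exists a sampling algorithm A which, on input x, first forms a masked string y ∈ {0,1,⋆}^k by independently keeping each coordinate x_i with probability q_i = 1 - β_i(T) and replacing it with ⋆ with probability β_i(T), and then outputs a (possibly randomized) guess depending only on y, such that for every input x, Pr[ A(x) ≠ f(x) ] ≤ δ. -/

import Mathlib

/-- A randomized decision tree on inputs from `{0,1}^k`: each internal node is
labeled by a coordinate `i ∈ {1,…,k}` and a function `g : {0,1} → [0,1]`; on input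
`x`, the computation at such a node moves to the left child with probability
`g (x i)` and to the right child with probability `1 - g (x i)`, independently
across nodes; leaves are labeled by output bits. -/
inductive RTree (k : ℕ) : Type where
  | leaf : Bool → RTree k
  | node : Fin k → (Bool → ℝ) → RTree k → RTree k → RTree k

namespace RTree

/-- All transition probabilities lie in `[0,1]`. -/
def Valid {k : ℕ} : RTree k → Prop
  | .leaf _ => True
  | .node _ g t0 t1 => (∀ z, 0 ≤ g z ∧ g z ≤ 1) ∧ Valid t0 ∧ Valid t1

/-- The probability, on input `x`, that the computation reaches the leaf at
position `p` (a root-to-leaf path, `false` = left, `true` = right). -/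
def leafDist {k : ℕ} : RTree k → (Fin k → Bool) → List Bool → ℝ
  | .leaf _, _, p => if p = [] then 1 else 0
  | .node _ _ _ _, _, [] => 0
  | .node i g t0 _, x, false :: p => g (x i) * leafDist t0 x p
  | .node i g _ t1, x, true :: p => (1 - g (x i)) * leafDist t1 x p

/-- The probability that the output `T(x)` (the 0/1 label of the leaf reached)
is `1` on input `x`. -/
def outProb {k : ℕ} : RTree k → (Fin k → Bool) → ℝ
  | .leaf b, _ => if b then 1 else 0
  | .node i g t0 t1, x => g (x i) * outProb t0 x + (1 - g (x i)) * outProb t1 x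

/-- `IsMod i T T'` holds iff `T'` is obtained from `T` by keeping unchanged every
node labeled `i` and replacing, at each node labeled `j ≠ i`, the random transition
by an arbitrary fixed deterministic choice of child (a constant transition
function `1` or `0`). -/
def IsMod {k : ℕ} (i : Fin k) : RTree k → RTree k → Prop
  | .leaf b, .leaf b' => b' = b
  | .node j g t0 t1, .node j' g' t0' t1' =>
      j' = j ∧ IsMod i t0 t0' ∧ IsMod i t1 t1' ∧
        (if j = i then g' = g else g' = (fun _ => 1) ∨ g' = (fun _ => 0))
  | _, _ => False

/-- The overlap `∑_ℓ min (D'_0 ℓ) (D'_1 ℓ)` of the two leaf distributions of a tree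
whose only input dependence is on coordinate `i`, when `x i = 0` resp. `x i = 1`. -/
noncomputable def ovl {k : ℕ} (t : RTree k) : ℝ :=
  ∑' p : List Bool, min (t.leafDist (fun _ => false) p) (t.leafDist (fun _ => true) p)

/-- The uncertainty `β_i(T)` of `T` about coordinate `i`: the minimum, over all
trees `T'` obtained from `T` by fixing deterministic choices at all nodes labeled
`j ≠ i`, of the overlap between the leaf distributions of `T'` for `x i = 0` and
`x i = 1`. -/
noncomputable def beta {k : ℕ} (t : RTree k) (i : Fin k) : ℝ :=
  sInf {v : ℝ | ∃ t', IsMod i t t' ∧ ovl t' = v}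

end RTree

/-- The masked string `y ∈ {0,1,⋆}^k` obtained from `x` by keeping exactly the
coordinates in `S` (a `⋆` is modelled as `none`). -/
def mask {k : ℕ} (x : Fin k → Bool) (S : Finset (Fin k)) : Fin k → Option Bool :=
  fun i => if i ∈ S then some (x i) else none

/-! On input `x` a leaf is reached with probability `∏ i, a i (x i)`, where `a i b` collects the
transition probabilities at the nodes labeled `i`, read with the bit `b`; each `a i b` is a
realization plan of mass one in the sense of extensive-form games. It suffices to split
`a i b = (1 - β i) • R i b + β i • R i ⋆` into plans of mass one: multiplying out over `i` amounts
to masking `x` at random, so on `y` one answers `1` with the probability that the weights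
`∏ i, R i (y i)` give to the leaves labeled `1`. The splitting exists once some plan of mass `β i`
lies below both `a i 0` and `a i 1`, and this is max-flow min-cut on the tree: the maximal mass of
such a plan is attained as one of the overlaps over which `β i` minimizes. -/

theorem hasSum_list_bool_of_cons {M : Type*} [AddCommMonoid M] [TopologicalSpace M]
    [ContinuousAdd M] {h : List Bool → M} {a b : M} (h_nil : h [] = 0)
    (h_false : HasSum (fun p => h (false :: p)) a) (h_true : HasSum (fun p => h (true :: p)) b) :
    HasSum h (a + b) := by
  have h_disj : Disjoint (Set.range (List.cons false)) (Set.range (List.cons true)) := by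
    simp [Set.disjoint_left]
  have h_union : HasSum
      (h ∘ (↑) : ↥(Set.range (List.cons false) ∪ Set.range (List.cons true)) → M) (a + b) :=
    HasSum.add_disjoint h_disj (List.cons_injective.hasSum_range_iff.2 h_false)
      (List.cons_injective.hasSum_range_iff.2 h_true)
  refine (hasSum_subtype_iff_of_support_subset fun p hp => ?_).1 h_union
  match p with
  | [] => exact absurd h_nil hp
  | false :: p => exact .inl ⟨p, rfl⟩
  | true :: p => exact .inr ⟨p, rfl⟩

namespace RTree

section Overlap

variable {k : ℕ} {A : Bool → ℝ}

/-- `c` is the overlap of the leaf distributions of `t` for the two constant inputs, after scaling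
the distribution for the bit `b` by `A b`. The scaling makes the notion recursive in `t`. -/
def HasOverlap (t : RTree k) (A : Bool → ℝ) (c : ℝ) : Prop :=
  HasSum (fun p => min (A false * t.leafDist (fun _ => false) p)
    (A true * t.leafDist (fun _ => true) p)) c

theorem HasOverlap.ovl_eq {t : RTree k} {c : ℝ} (h : t.HasOverlap 1 c) : t.ovl = c := by
  simpa only [ovl, Pi.one_apply, one_mul] using h.tsum_eq

theorem hasOverlap_leaf (o : Bool) :
    (leaf o : RTree k).HasOverlap A (min (A false) (A true)) := by
  refine (hasSum_ite_eq [] (min (A false) (A true))).congr_fun fun p => ?_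
  by_cases hp : p = [] <;> simp [leafDist, hp]

theorem hasOverlap_zero (t : RTree k) : t.HasOverlap 0 0 := by
  simp [HasOverlap, hasSum_zero]

theorem HasOverlap.node {t₀ t₁ : RTree k} {g : Bool → ℝ} {c₀ c₁ : ℝ} (j : Fin k)
    (h₀ : t₀.HasOverlap (A * g) c₀) (h₁ : t₁.HasOverlap (A * (1 - g)) c₁) :
    (node j g t₀ t₁).HasOverlap A (c₀ + c₁) := by
  refine hasSum_list_bool_of_cons (by simp [leafDist]) ?_ ?_
  · simpa [HasOverlap, leafDist, mul_assoc] using h₀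
  · simpa [HasOverlap, leafDist, mul_assoc] using h₁

theorem HasOverlap.node_left {t₀ : RTree k} {c : ℝ} (j : Fin k) (t₁ : RTree k)
    (h : t₀.HasOverlap A c) : (RTree.node j (fun _ => 1) t₀ t₁).HasOverlap A c := by
  have h₀ : t₀.HasOverlap (A * fun _ => 1) c := by simpa [← Pi.one_def] using h
  have h₁ : t₁.HasOverlap (A * (1 - fun _ => 1)) 0 := by
    simpa [← Pi.one_def] using hasOverlap_zero t₁
  simpa using h₀.node j h₁

theorem HasOverlap.node_right {t₁ : RTree k} {c : ℝ} (j : Fin k) (t₀ : RTree k)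
    (h : t₁.HasOverlap A c) : (RTree.node j (fun _ => 0) t₀ t₁).HasOverlap A c := by
  have h₀ : t₀.HasOverlap (A * fun _ => 0) 0 := by
    simpa [← Pi.zero_def] using hasOverlap_zero t₀
  have h₁ : t₁.HasOverlap (A * (1 - fun _ => 0)) c := by simpa [← Pi.zero_def] using h
  simpa using h₀.node j h₁

theorem HasOverlap.exists_node_min {t₀ t₁ : RTree k} {c₀ c₁ : ℝ} (j : Fin k)
    (h₀ : t₀.HasOverlap A c₀) (h₁ : t₁.HasOverlap A c₁) :
    ∃ g, (g = (fun _ => 1) ∨ g = (fun _ => 0)) ∧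
      (RTree.node j g t₀ t₁).HasOverlap A (min c₀ c₁) := by
  rcases min_choice c₀ c₁ with h | h <;> rw [h]
  · exact ⟨_, .inl rfl, h₀.node_left j t₁⟩
  · exact ⟨_, .inr rfl, h₁.node_right j t₀⟩

theorem leafDist_nonneg (x : Fin k → Bool) {t : RTree k} (ht : t.Valid) (p : List Bool) :
    0 ≤ t.leafDist x p := by
  induction t generalizing p with
  | leaf => simp only [leafDist]; positivity
  | node j g t₀ t₁ ih₀ ih₁ =>
    obtain ⟨hg, ht₀, ht₁⟩ := ht
    match p with
    | [] => exact le_rfl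
    | false :: p => exact mul_nonneg (hg _).1 (ih₀ ht₀ p)
    | true :: p => exact mul_nonneg (sub_nonneg.2 (hg _).2) (ih₁ ht₁ p)

theorem ovl_nonneg {t : RTree k} (ht : t.Valid) : 0 ≤ t.ovl :=
  tsum_nonneg fun p => le_min (leafDist_nonneg _ ht p) (leafDist_nonneg _ ht p)

theorem Valid.of_isMod {i : Fin k} {t t' : RTree k} (ht : t.Valid) (h : IsMod i t t') :
    t'.Valid := by
  induction t generalizing t' with
  | leaf => cases t' with
    | leaf => trivial
    | node => exact h.elim
  | node j g t₀ t₁ ih₀ ih₁ => cases t' with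
    | leaf => exact h.elim
    | node j' g' t₀' t₁' =>
      obtain ⟨hg, ht₀, ht₁⟩ := ht
      obtain ⟨-, h₀, h₁, hg'⟩ := h
      refine ⟨?_, ih₀ ht₀ h₀, ih₁ ht₁ h₁⟩
      split_ifs at hg'
      · rwa [hg']
      · rcases hg' with rfl | rfl <;> simp

theorem beta_nonneg {t : RTree k} (ht : t.Valid) (i : Fin k) : 0 ≤ t.beta i := by
  refine Real.sInf_nonneg ?_
  rintro _ ⟨t', h, rfl⟩
  exact ovl_nonneg (ht.of_isMod h)

theorem beta_le_ovl {i : Fin k} {t t' : RTree k} (ht : t.Valid) (h : IsMod i t t') :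
    t.beta i ≤ t'.ovl := by
  refine csInf_le ⟨0, ?_⟩ ⟨t', h, rfl⟩
  rintro _ ⟨t'', h'', rfl⟩
  exact ovl_nonneg (ht.of_isMod h'')

end Overlap

section Plan

variable {k : ℕ} {i : Fin k} {t : RTree k}

/-- The leaves of a tree, as a type; unlike root-to-leaf paths it has no junk elements. -/
abbrev Leaf : RTree k → Type
  | .leaf _ => Unit
  | .node _ _ t₀ t₁ => t₀.Leaf ⊕ t₁.Leaf

instance instFintypeLeaf : (t : RTree k) → Fintype t.Leaf
  | .leaf _ => inferInstanceAs (Fintype Unit)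
  | .node _ _ t₀ t₁ =>
    letI := instFintypeLeaf t₀
    letI := instFintypeLeaf t₁
    inferInstanceAs (Fintype (t₀.Leaf ⊕ t₁.Leaf))

theorem sum_leaf_node {M : Type*} [AddCommMonoid M] {j : Fin k} {g : Bool → ℝ} {t₀ t₁ : RTree k}
    (f : (node j g t₀ t₁).Leaf → M) :
    ∑ l, f l = ∑ l : t₀.Leaf, f (.inl l) + ∑ l : t₁.Leaf, f (.inr l) :=
  Fintype.sum_sum_type f

/-- The output bit at a leaf. -/
def label : (t : RTree k) → t.Leaf → Bool
  | .leaf o, _ => o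
  | .node _ _ t₀ _, .inl l => t₀.label l
  | .node _ _ _ t₁, .inr l => t₁.label l

/-- The contribution of the nodes labeled `i` to the probability of reaching a leaf, when the input
has the bit `b` at `i`. -/
def coordWeight (i : Fin k) (b : Bool) : (t : RTree k) → t.Leaf → ℝ
  | .leaf _, _ => 1
  | .node j g t₀ _, .inl l => (if j = i then g b else 1) * t₀.coordWeight i b l
  | .node j g _ t₁, .inr l => (if j = i then 1 - g b else 1) * t₁.coordWeight i b l

/-- `w` is a (signed) realization plan of mass `c` for the player who moves at the nodes labeled
`i`: mass splits among the children at these nodes and is copied to both children at all others. -/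
def IsPlan (i : Fin k) : (t : RTree k) → (t.Leaf → ℝ) → ℝ → Prop
  | .leaf _, w, c => w () = c
  | .node j _ t₀ t₁, w, c => ∃ c₀ c₁, (if j = i then c₀ + c₁ = c else c₀ = c ∧ c₁ = c) ∧
      IsPlan i t₀ (fun l => w (.inl l)) c₀ ∧ IsPlan i t₁ (fun l => w (.inr l)) c₁

theorem IsPlan.node_self {t₀ t₁ : RTree k} {w₀ : t₀.Leaf → ℝ} {w₁ : t₁.Leaf → ℝ} {c₀ c₁ : ℝ}
    (g : Bool → ℝ) (h₀ : IsPlan i t₀ w₀ c₀) (h₁ : IsPlan i t₁ w₁ c₁) :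
    IsPlan i (.node i g t₀ t₁) (Sum.elim w₀ w₁) (c₀ + c₁) :=
  ⟨c₀, c₁, by rw [if_pos rfl], h₀, h₁⟩

theorem IsPlan.node_of_ne {j : Fin k} {t₀ t₁ : RTree k} {w₀ : t₀.Leaf → ℝ} {w₁ : t₁.Leaf → ℝ}
    {c : ℝ} (hj : j ≠ i) (g : Bool → ℝ) (h₀ : IsPlan i t₀ w₀ c) (h₁ : IsPlan i t₁ w₁ c) :
    IsPlan i (.node j g t₀ t₁) (Sum.elim w₀ w₁) c :=
  ⟨c, c, by simp only [if_neg hj, and_self], h₀, h₁⟩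

theorem IsPlan.smul {w : t.Leaf → ℝ} {c : ℝ} (u : ℝ) (h : IsPlan i t w c) :
    IsPlan i t (u • w) (u * c) := by
  induction t generalizing c with
  | leaf => exact congrArg (u * ·) h
  | node j g t₀ t₁ ih₀ ih₁ =>
    obtain ⟨c₀, c₁, hc, h₀, h₁⟩ := h
    refine ⟨u * c₀, u * c₁, ?_, ih₀ h₀, ih₁ h₁⟩
    split_ifs at hc ⊢
    · rw [← hc, mul_add]
    · simp only [hc, and_self]

theorem IsPlan.sub {w v : t.Leaf → ℝ} {c d : ℝ} (hw : IsPlan i t w c) (hv : IsPlan i t v d) :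
    IsPlan i t (w - v) (c - d) := by
  induction t generalizing c d with
  | leaf => exact congrArg₂ (· - ·) hw hv
  | node j g t₀ t₁ ih₀ ih₁ =>
    obtain ⟨c₀, c₁, hc, hw₀, hw₁⟩ := hw
    obtain ⟨d₀, d₁, hd, hv₀, hv₁⟩ := hv
    refine ⟨c₀ - d₀, c₁ - d₁, ?_, ih₀ hw₀ hv₀, ih₁ hw₁ hv₁⟩
    split_ifs at hc hd ⊢
    · rw [← hc, ← hd]; ring
    · simp only [hc, hd, and_self]

theorem IsPlan.mass_nonneg {w : t.Leaf → ℝ} {c : ℝ} (h : IsPlan i t w c) (hw : 0 ≤ w) :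
    0 ≤ c := by
  induction t generalizing c with
  | leaf => exact (hw ()).trans_eq h
  | node j g t₀ t₁ ih₀ ih₁ =>
    obtain ⟨c₀, c₁, hc, h₀, h₁⟩ := h
    have hc₀ : 0 ≤ c₀ := ih₀ h₀ fun l => hw (.inl l)
    have hc₁ : 0 ≤ c₁ := ih₁ h₁ fun l => hw (.inr l)
    split_ifs at hc
    · exact hc ▸ add_nonneg hc₀ hc₁
    · exact hc.1 ▸ hc₀

theorem IsPlan.eq_zero {w : t.Leaf → ℝ} (h : IsPlan i t w 0) (hw : 0 ≤ w) : w = 0 := by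
  induction t with
  | leaf => exact funext fun _ => h
  | node j g t₀ t₁ ih₀ ih₁ =>
    obtain ⟨c₀, c₁, hc, h₀, h₁⟩ := h
    have hw₀ : 0 ≤ fun l => w (.inl l) := fun l => hw (.inl l)
    have hw₁ : 0 ≤ fun l => w (.inr l) := fun l => hw (.inr l)
    obtain ⟨rfl, rfl⟩ : c₀ = 0 ∧ c₁ = 0 := by
      split_ifs at hc
      · exact (add_eq_zero_iff_of_nonneg (h₀.mass_nonneg hw₀) (h₁.mass_nonneg hw₁)).1 hc
      · exact hc
    funext l
    cases l with
    | inl l => exact congrFun (ih₀ h₀ hw₀) l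
    | inr l => exact congrFun (ih₁ h₁ hw₁) l

theorem IsPlan.exists_le {w : t.Leaf → ℝ} {c d : ℝ} (h : IsPlan i t w c) (hw : 0 ≤ w)
    (hd : 0 ≤ d) (hdc : d ≤ c) : ∃ v, IsPlan i t v d ∧ 0 ≤ v ∧ v ≤ w := by
  have hc : 0 ≤ c := hd.trans hdc
  have h_mass : d / c * c = d := div_mul_cancel_of_imp fun hc0 => le_antisymm (hc0 ▸ hdc) hd
  refine ⟨(d / c) • w, by simpa only [h_mass] using h.smul (d / c),
    smul_nonneg (div_nonneg hd hc) hw, fun l => ?_⟩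
  exact mul_le_of_le_one_left (hw l) (div_le_one_of_le₀ hdc hc)

theorem IsPlan.exists_eq_smul {w u : t.Leaf → ℝ} {c : ℝ} (hw : IsPlan i t w c) (hw₀ : 0 ≤ w)
    (hu : IsPlan i t u 1) (hu₀ : 0 ≤ u) : ∃ v, IsPlan i t v 1 ∧ 0 ≤ v ∧ w = c • v := by
  rcases eq_or_ne c 0 with rfl | hc
  · exact ⟨u, hu, hu₀, by rw [hw.eq_zero hw₀, zero_smul]⟩
  · refine ⟨c⁻¹ • w, ?_, smul_nonneg (inv_nonneg.2 (hw.mass_nonneg hw₀)) hw₀, ?_⟩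
    · simpa only [inv_mul_cancel₀ hc] using hw.smul c⁻¹
    · rw [smul_inv_smul₀ hc]

theorem sum_prod_eq_prod_mass {r : Fin k → t.Leaf → ℝ} {c : Fin k → ℝ}
    (h : ∀ i, IsPlan i t (r i) (c i)) : ∑ l, ∏ i, r i l = ∏ i, c i := by
  induction t generalizing c with
  | leaf => exact (Fintype.sum_unique _).trans (Finset.prod_congr rfl fun i _ => h i)
  | node j g t₀ t₁ ih₀ ih₁ =>
    choose c₀ c₁ hc h₀ h₁ using h
    rw [sum_leaf_node, ih₀ h₀, ih₁ h₁]
    refine Finset.prod_add_prod_eq (Finset.mem_univ j) ?_ ?_ ?_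
    · simpa only [if_true] using hc j
    · exact fun i _ hi => ((if_neg hi.symm).mp (hc i)).1
    · exact fun i _ hi => ((if_neg hi.symm).mp (hc i)).2

theorem isPlan_coordWeight (i : Fin k) (b : Bool) (t : RTree k) :
    IsPlan i t (t.coordWeight i b) 1 := by
  induction t with
  | leaf => rfl
  | node j g t₀ t₁ ih₀ ih₁ =>
    refine ⟨_, _, ?_, ih₀.smul (if j = i then g b else 1), ih₁.smul (if j = i then 1 - g b else 1)⟩
    split_ifs <;> simp

theorem coordWeight_nonneg (ht : t.Valid) (i : Fin k) (b : Bool) : 0 ≤ t.coordWeight i b := by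
  induction t with
  | leaf => exact fun _ => zero_le_one
  | node j g t₀ t₁ ih₀ ih₁ =>
    obtain ⟨hg, ht₀, ht₁⟩ := ht
    rintro (l | l)
    · refine mul_nonneg ?_ (ih₀ ht₀ l)
      split_ifs
      exacts [(hg b).1, zero_le_one]
    · refine mul_nonneg ?_ (ih₁ ht₁ l)
      split_ifs
      exacts [sub_nonneg.2 (hg b).2, zero_le_one]

end Plan

section MaxFlowMinCut

variable {k : ℕ} {t : RTree k}

theorem exists_isMod_isPlan_le_coordWeight (ht : t.Valid) (i : Fin k) {A : Bool → ℝ}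
    (hA : 0 ≤ A) : ∃ t' c w, IsMod i t t' ∧ t'.HasOverlap A c ∧
      IsPlan i t w c ∧ 0 ≤ w ∧ ∀ b, w ≤ A b • t.coordWeight i b := by
  induction t generalizing A with
  | leaf o =>
    refine ⟨leaf o, _, fun _ => min (A false) (A true), rfl, hasOverlap_leaf o, rfl,
      fun _ => le_min (hA false) (hA true), fun b _ => ?_⟩
    cases b <;> simp [coordWeight]
  | node j g t₀ t₁ ih₀ ih₁ =>
    obtain ⟨hg, ht₀, ht₁⟩ := ht
    by_cases hj : j = i
    · subst hj
      have hA₀ : 0 ≤ A * g := mul_nonneg hA fun b => (hg b).1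
      have hA₁ : 0 ≤ A * (1 - g) := mul_nonneg hA fun b => sub_nonneg.2 (hg b).2
      obtain ⟨t₀', c₀, w₀, hm₀, ho₀, hp₀, hw₀, hle₀⟩ := ih₀ ht₀ hA₀
      obtain ⟨t₁', c₁, w₁, hm₁, ho₁, hp₁, hw₁, hle₁⟩ := ih₁ ht₁ hA₁
      refine ⟨node j g t₀' t₁', c₀ + c₁, Sum.elim w₀ w₁, ⟨rfl, hm₀, hm₁, by rw [if_pos rfl]⟩,
        ho₀.node j ho₁, hp₀.node_self g hp₁, Sum.rec hw₀ hw₁, fun b => Sum.rec ?_ ?_⟩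
      · simpa [coordWeight, mul_assoc, Pi.le_def] using hle₀ b
      · simpa [coordWeight, mul_assoc, Pi.le_def] using hle₁ b
    · obtain ⟨t₀', c₀, w₀, hm₀, ho₀, hp₀, hw₀, hle₀⟩ := ih₀ ht₀ hA
      obtain ⟨t₁', c₁, w₁, hm₁, ho₁, hp₁, hw₁, hle₁⟩ := ih₁ ht₁ hA
      have hc : 0 ≤ min c₀ c₁ := le_min (hp₀.mass_nonneg hw₀) (hp₁.mass_nonneg hw₁)
      obtain ⟨v₀, hq₀, hv₀, hvw₀⟩ := hp₀.exists_le hw₀ hc (min_le_left _ _)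
      obtain ⟨v₁, hq₁, hv₁, hvw₁⟩ := hp₁.exists_le hw₁ hc (min_le_right _ _)
      obtain ⟨g', hg', ho⟩ := ho₀.exists_node_min j ho₁
      refine ⟨node j g' t₀' t₁', min c₀ c₁, Sum.elim v₀ v₁, ⟨rfl, hm₀, hm₁, by rwa [if_neg hj]⟩,
        ho, hq₀.node_of_ne hj g hq₁, Sum.rec hv₀ hv₁, fun b => Sum.rec ?_ ?_⟩
      · simpa [coordWeight, hj, Pi.le_def] using hvw₀.trans (hle₀ b)
      · simpa [coordWeight, hj, Pi.le_def] using hvw₁.trans (hle₁ b)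

theorem exists_isPlan_beta_le_coordWeight (ht : t.Valid) (i : Fin k) :
    ∃ w, IsPlan i t w (t.beta i) ∧ 0 ≤ w ∧ ∀ b, w ≤ t.coordWeight i b := by
  obtain ⟨t', c, w, hm, ho, hp, hw, hle⟩ :=
    exists_isMod_isPlan_le_coordWeight ht i (zero_le_one : 0 ≤ (1 : Bool → ℝ))
  have hβ : t.beta i ≤ c := ho.ovl_eq ▸ beta_le_ovl ht hm
  obtain ⟨v, hq, hv, hvw⟩ := hp.exists_le hw (beta_nonneg ht i) hβ
  exact ⟨v, hq, hv, fun b => by simpa using hvw.trans (hle b)⟩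

theorem exists_coordWeight_eq_mixture (ht : t.Valid) (i : Fin k) :
    ∃ R : Option Bool → t.Leaf → ℝ, (∀ o, IsPlan i t (R o) 1) ∧ (∀ o, 0 ≤ R o) ∧
      ∀ b, t.coordWeight i b = (1 - t.beta i) • R (some b) + t.beta i • R none := by
  have hu := isPlan_coordWeight i
  have hu₀ := coordWeight_nonneg ht i
  obtain ⟨w, hw, hw₀, hle⟩ := exists_isPlan_beta_le_coordWeight ht i
  obtain ⟨v, hv, hv₀, hwv⟩ := hw.exists_eq_smul hw₀ (hu false t) (hu₀ false)
  choose r hr hr₀ hwr using fun b =>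
    ((hu b t).sub hw).exists_eq_smul (sub_nonneg.2 (hle b)) (hu b t) (hu₀ b)
  refine ⟨fun o => o.elim v r, Option.rec hv hr, Option.rec hv₀ hr₀, fun b => ?_⟩
  calc t.coordWeight i b = (t.coordWeight i b - w) + w := (sub_add_cancel _ _).symm
    _ = (1 - t.beta i) • r b + t.beta i • v := by rw [hwr b, hwv]

end MaxFlowMinCut

section Sampling

variable {k : ℕ}

/-- The total weight of the leaves labeled `1`, where a leaf `l` has the product weight
`∏ i, r i l`. -/
def acceptWeight (t : RTree k) (r : Fin k → t.Leaf → ℝ) : ℝ :=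
  ∑ l, if t.label l then ∏ i, r i l else 0

theorem acceptWeight_nonneg {t : RTree k} {r : Fin k → t.Leaf → ℝ} (hr : ∀ i, 0 ≤ r i) :
    0 ≤ t.acceptWeight r :=
  Finset.sum_nonneg fun l _ => ite_nonneg (Finset.prod_nonneg fun i _ => hr i l) le_rfl

theorem acceptWeight_le_one {t : RTree k} {r : Fin k → t.Leaf → ℝ} (hr : ∀ i, 0 ≤ r i)
    (h : ∀ i, IsPlan i t (r i) 1) : t.acceptWeight r ≤ 1 :=
  calc t.acceptWeight r ≤ ∑ l, ∏ i, r i l := Finset.sum_le_sum fun l _ =>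
        ite_le_sup _ _ _ |>.trans (sup_le le_rfl (Finset.prod_nonneg fun i _ => hr i l))
    _ = 1 := by rw [sum_prod_eq_prod_mass h, Finset.prod_const_one]

theorem acceptWeight_coordWeight (t : RTree k) (x : Fin k → Bool) :
    t.acceptWeight (fun i => t.coordWeight i (x i)) = t.outProb x := by
  unfold acceptWeight
  induction t with
  | leaf o => cases o <;> simp [label, coordWeight, outProb]
  | node j g t₀ t₁ ih₀ ih₁ =>
    rw [sum_leaf_node, outProb, ← ih₀, ← ih₁]
    simp only [label, coordWeight, Finset.prod_mul_distrib, Finset.prod_ite_eq, Finset.mem_univ,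
      if_true, Finset.mul_sum, mul_ite, mul_zero]

theorem sum_prod_mask {R : Type*} [CommSemiring R] (q r : Fin k → R)
    (F : Fin k → Option Bool → R) (x : Fin k → Bool) :
    ∑ S : Finset (Fin k), (∏ i ∈ S, q i) * (∏ i ∈ Sᶜ, r i) * ∏ i, F i (mask x S i) =
      ∏ i, (q i * F i (some (x i)) + r i * F i none) := by
  rw [Fintype.prod_add]
  refine Finset.sum_congr rfl fun S _ => ?_
  have h_kept : ∏ i ∈ S, F i (mask x S i) = ∏ i ∈ S, F i (some (x i)) :=
    Finset.prod_congr rfl fun i hi => by rw [mask, if_pos hi]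
  have h_masked : ∏ i ∈ Sᶜ, F i (mask x S i) = ∏ i ∈ Sᶜ, F i none :=
    Finset.prod_congr rfl fun i hi => by rw [mask, if_neg (Finset.mem_compl.1 hi)]
  rw [← Finset.prod_mul_prod_compl S, h_kept, h_masked, Finset.prod_mul_distrib,
    Finset.prod_mul_distrib, mul_mul_mul_comm]

theorem sum_acceptWeight_mask (t : RTree k) (q r : Fin k → ℝ)
    (R : Fin k → Option Bool → t.Leaf → ℝ) (x : Fin k → Bool) :
    ∑ S : Finset (Fin k), (∏ i ∈ S, q i) * (∏ i ∈ Sᶜ, r i) *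
        t.acceptWeight (fun i => R i (mask x S i)) =
      t.acceptWeight (fun i => q i • R i (some (x i)) + r i • R i none) := by
  simp only [acceptWeight, Finset.mul_sum]
  rw [Finset.sum_comm]
  refine Finset.sum_congr rfl fun l _ => ?_
  split_ifs
  · exact sum_prod_mask q r (fun i o => R i o l) x
  · simp only [mul_zero, Finset.sum_const_zero]

end Sampling

end RTree

open RTree in
/-- If a randomized decision tree `T` computes `f` with error at most `δ` on every
input, then there is a sampling algorithm (a randomized guess `g` depending only on
the masked string, where coordinate `i` is kept independently with probability
`q_i = 1 - β_i(T)` and replaced by `⋆` with probability `β_i(T)`) which computes `f`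
with error at most `δ` on every input. -/
theorem randomized_tree_to_sampling {k : ℕ} (δ : ℝ)
    (f : (Fin k → Bool) → Bool) (T : RTree k) (hT : T.Valid)
    (herr : ∀ x : Fin k → Bool,
      (if f x = true then 1 - T.outProb x else T.outProb x) ≤ δ) :
    ∃ g : (Fin k → Option Bool) → ℝ, (∀ y, 0 ≤ g y ∧ g y ≤ 1) ∧
      ∀ x : Fin k → Bool,
        (if f x = true then
            1 - ∑ S : Finset (Fin k),
              (∏ i ∈ S, (1 - T.beta i)) * (∏ i ∈ Sᶜ, T.beta i) * g (mask x S)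
          else
            ∑ S : Finset (Fin k),
              (∏ i ∈ S, (1 - T.beta i)) * (∏ i ∈ Sᶜ, T.beta i) * g (mask x S)) ≤ δ := by
  choose R hplan hnonneg hmix using exists_coordWeight_eq_mixture hT
  refine ⟨fun y => T.acceptWeight fun i => R i (y i), fun y => ?_, fun x => ?_⟩
  · exact ⟨acceptWeight_nonneg fun i => hnonneg i (y i),
      acceptWeight_le_one (fun i => hnonneg i (y i)) fun i => hplan i (y i)⟩
  · have h_acc : ∑ S : Finset (Fin k), (∏ i ∈ S, (1 - T.beta i)) * (∏ i ∈ Sᶜ, T.beta i) *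
        T.acceptWeight (fun i => R i (mask x S i)) = T.outProb x := by
      simp only [sum_acceptWeight_mask, ← hmix, acceptWeight_coordWeight]
    simpa only [h_acc] using herr x
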